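/- Let α be a type with a nonempty finite ground set V (a finset), and let f : Finset α → ℝ be monotone (f(S) ≤ f(T) whenever S ⊆ T) and submodular (f(insert x S) − f(S) ≥ f(insert x T) − f(T) whenever S ⊆ T and x ∉ T). Let k ≥ 1 be a natural number, let T ⊆ V with |T| ≤ k, let S ⊆ V, and let x* ∈ V be a maximizer of x ↦ f(insert x S) over V. Then f(T) − f(insert x* S) ≤ (1 − 1/k) · (f(T) − f(S)). -/

import Mathlib

/-!
Adding the elements of `T` to `S` one at a time reaches `S ∪ T`, and by diminishing returns each
step gains at most what the same element gains when added directly to `S`. If the best such gain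
is `g`, then monotonicity yields `f T - f S ≤ f (S ∪ T) - f S ≤ k * g`, so the greedy step closes
at least a `1 / k` fraction of the gap.
-/

open Finset

section Submodular

variable {α M 𝕜 : Type*} [DecidableEq α]

/-- The marginal gain `f (S ∪ {x}) - f S` of an element `x` over a set `S`; zero if `x ∈ S`. -/
def marginalGain [Sub M] (f : Finset α → M) (S : Finset α) (x : α) : M :=
  f (insert x S) - f S

/-- Submodularity of a set function, in its diminishing-returns form. Only elements outside the
larger set are tested, so that monotonicity of `f` is not implied. -/
def IsSubmodular [Sub M] [LE M] (f : Finset α → M) : Prop :=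
  ∀ S T : Finset α, S ⊆ T → ∀ x ∉ T, marginalGain f T x ≤ marginalGain f S x

theorem marginalGain_of_mem [AddGroup M] (f : Finset α → M) {S : Finset α} {x : α} (hx : x ∈ S) :
    marginalGain f S x = 0 := by
  rw [marginalGain, insert_eq_of_mem hx, sub_self]

namespace IsSubmodular

theorem marginalGain_le_of_subset [AddGroup M] [Preorder M] {f : Finset α → M} (hf : IsSubmodular f)
    {S T : Finset α} (hST : S ⊆ T) {x : α} (hx : x ∈ T → x ∈ S) :
    marginalGain f T x ≤ marginalGain f S x := by
  by_cases hxT : x ∈ T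
  · rw [marginalGain_of_mem f hxT, marginalGain_of_mem f (hx hxT)]
  · exact hf S T hST x hxT

variable [AddCommGroup M] [PartialOrder M] [IsOrderedAddMonoid M] {f : Finset α → M}

theorem union_sub_le_sum_marginalGain (hf : IsSubmodular f) (S T : Finset α) :
    f (S ∪ T) - f S ≤ ∑ x ∈ T, marginalGain f S x := by
  induction T using Finset.induction_on with
  | empty => simp
  | insert a T ha ih =>
    have hgain : marginalGain f (S ∪ T) a ≤ marginalGain f S a :=
      hf.marginalGain_le_of_subset subset_union_left fun h ↦ (mem_union.mp h).resolve_right ha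
    calc f (S ∪ insert a T) - f S
        = marginalGain f (S ∪ T) a + (f (S ∪ T) - f S) := by
          rw [union_insert, marginalGain, sub_add_sub_cancel]
      _ ≤ marginalGain f S a + ∑ x ∈ T, marginalGain f S x := add_le_add hgain ih
      _ = ∑ x ∈ insert a T, marginalGain f S x := (sum_insert ha).symm

theorem sub_le_card_nsmul (hf : IsSubmodular f) (hmono : Monotone f) {S T : Finset α} {g : M}
    (hg : ∀ x ∈ T, marginalGain f S x ≤ g) : f T - f S ≤ #T • g :=
  calc f T - f S
      ≤ f (S ∪ T) - f S := sub_le_sub_right (hmono subset_union_right) _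
    _ ≤ ∑ x ∈ T, marginalGain f S x := hf.union_sub_le_sum_marginalGain S T
    _ ≤ #T • g := sum_le_card_nsmul T _ g hg

end IsSubmodular

theorem greedy_step_gap_shrink_general [Field 𝕜] [LinearOrder 𝕜] [IsStrictOrderedRing 𝕜]
    {f : Finset α → 𝕜} (hmono : Monotone f) (hsub : IsSubmodular f) {k : 𝕜} (hk : 0 < k)
    {S T : Finset α} (hTk : #T ≤ k) {x : α} (hmax : ∀ y ∈ T, f (insert y S) ≤ f (insert x S)) :
    f T - f (insert x S) ≤ (1 - 1 / k) * (f T - f S) := by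
  have gain_nonneg : 0 ≤ marginalGain f S x := sub_nonneg.mpr (hmono (subset_insert x S))
  have gap_le : f T - f S ≤ k * marginalGain f S x :=
    calc f T - f S
        ≤ #T • marginalGain f S x :=
          hsub.sub_le_card_nsmul hmono fun y hy ↦ sub_le_sub_right (hmax y hy) _
      _ = #T * marginalGain f S x := nsmul_eq_mul _ _
      _ ≤ k * marginalGain f S x := mul_le_mul_of_nonneg_right hTk gain_nonneg
  calc f T - f (insert x S)
      = (f T - f S) - marginalGain f S x := by rw [marginalGain, sub_sub_sub_cancel_right]
    _ ≤ (f T - f S) - (f T - f S) / k := sub_le_sub_left ((div_le_iff₀' hk).mpr gap_le) _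
    _ = (1 - 1 / k) * (f T - f S) := by ring

end Submodular

theorem greedy_step_gap_shrink
    {α : Type*} [DecidableEq α] (V : Finset α) (hV : V.Nonempty)
    (f : Finset α → ℝ)
    (hmono : ∀ S T : Finset α, S ⊆ T → f S ≤ f T)
    (hsub : ∀ S T : Finset α, S ⊆ T → ∀ x ∉ T,
      f (insert x T) - f T ≤ f (insert x S) - f S)
    (k : ℕ) (hk : 1 ≤ k)
    (T : Finset α) (hT : T ⊆ V) (hTk : T.card ≤ k)
    (S : Finset α) (hS : S ⊆ V)
    (xstar : α) (hx : xstar ∈ V)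
    (hmax : ∀ y ∈ V, f (insert y S) ≤ f (insert xstar S)) :
    f T - f (insert xstar S) ≤ (1 - 1 / (k : ℝ)) * (f T - f S) :=
  greedy_step_gap_shrink_general (fun S T h ↦ hmono S T h) hsub (Nat.cast_pos.mpr hk)
    (Nat.cast_le.mpr hTk) fun y hy ↦ hmax y (hT hy)
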